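/- For every integer k ≥ 3 and every ε with |ε| ≤ r/2, the off-center k-th absolute moment of the score of an r-smoothed density satisfies E_{x~f_r}[|s_r(x+ε)|^k] ≤ (k!/2) · (15/r)^{k−2} · max( E_{x~f_r}[s_r(x+ε)²] , I_r ); that is, the random variable s_r(x+ε) for x ~ f_r is sub-Gamma with variance factor max(E_{x~f_r}[s_r(x+ε)²], I_r) and scale factor 15/r. -/

import Mathlib

/-!
Write `p = f_r`, `s = p'/p` and `S = r s`. Given the observation `x = Y + Z`, the score `s(x)` is
the posterior mean of `(Y - x) / r²`, so Jensen's inequality for `exp` yields the growth bound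
`p(x + r l) ≥ p(x) exp(l S(x) - l² / 2)` for every real `l` (`smoothed_growth`). Everything else
follows from it. Using it in both directions between two points shows that `S(x + r l) ≥ S(x) - l`
for `l ≥ 0` (`score_drift`), and averaging it over `l = ± 1` shows that `s² p` is integrable.

For the moments, put `t = |S(x + ε)|` and `m = k - 2`. Where `t ≤ 15`, clearly
`t ^ k ≤ 15 ^ m t ^ 2`. Where `t > 15`, an excursion of the score is followed by exponential growth
of the density: either `|S(x)| ≥ 2t/3` and `p` grows by about `exp |S(x)|` on the way from `x` to
`x + r` or `x - r`, or `p` grows at least by about `exp (t / 6)` on the way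
from `x` through `x + ε` to `x ± r`. The score is still of order `t` at the end point, so in all
cases `t ^ k p(x) ≤ m! 15 ^ m (S² p (x + r) + S² p (x - r))` (`pointwise_pos`). Integrating, the
right-hand side contributes two translates of the Fisher information integral, and the claim
follows from `15 ^ m (1 + 2 m!) ≤ 15 ^ m k! / 2`.
-/

open MeasureTheory Real

noncomputable section

/-- The Gaussian density with mean 0 and variance `r ^ 2`. -/
def gaussPdf (r x : ℝ) : ℝ :=
  Real.exp (-(x ^ 2) / (2 * r ^ 2)) / Real.sqrt (2 * Real.pi * r ^ 2)

/-- The `r`-smoothed density `f_r`, i.e. the density of `Y + Z` where `Y ~ f` and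
`Z ~ N(0, r²)` independent. -/
def smoothed (f : ℝ → ℝ) (r x : ℝ) : ℝ := ∫ y, f y * gaussPdf r (x - y)

/-- The score function `s_r = f_r' / f_r` of the smoothed density. -/
def score (f : ℝ → ℝ) (r x : ℝ) : ℝ :=
  deriv (fun t => smoothed f r t) x / smoothed f r x

/-- The Fisher information `I_r = E_{x ~ f_r}[s_r(x)²]` of the smoothed density. -/
def fisherInfo (f : ℝ → ℝ) (r : ℝ) : ℝ := ∫ x, score f r x ^ 2 * smoothed f r x

/-- `f` is a probability density on `ℝ`. -/
def IsDensity (f : ℝ → ℝ) : Prop :=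
  (∀ x, 0 ≤ f x) ∧ MeasureTheory.Integrable f ∧ (∫ x, f x) = 1

/-! ### Pointwise consequences of the growth bound -/

lemma exp_half_le : exp (1 / 2) ≤ 5 / 3 := by
  have h : exp (1 / 2) ^ 2 = exp 1 := by rw [← exp_nat_mul]; norm_num
  have := exp_one_lt_d9
  nlinarith [exp_pos (1 / 2)]

lemma pow_le_factorial_mul_exp {x : ℝ} (hx : 0 ≤ x) (m : ℕ) : x ^ m ≤ m.factorial * exp x := by
  have := pow_div_factorial_le_exp x hx m
  rwa [div_le_iff₀' (by positivity)] at this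

/-- In the growth bound `h`, `S` plays the role of the logarithmic derivative of `P`; comparing `h`
from `u` to `u + l` with `h` back from `u + l` to `u` bounds the decrease of `S`. -/
lemma score_drift {P S : ℝ → ℝ} (hP : ∀ u, 0 < P u)
    (h : ∀ u l, P u * exp (l * S u - l ^ 2 / 2) ≤ P (u + l)) (u l : ℝ) (hl : 0 ≤ l) :
    S u - l ≤ S (u + l) := by
  rcases hl.lt_or_eq with hl | rfl
  · have h1 := h u l
    have h2 := h (u + l) (-l)
    rw [add_neg_cancel_right] at h2
    have h3 : P u * exp ((l * S u - l ^ 2 / 2) + (-l * S (u + l) - (-l) ^ 2 / 2)) ≤ P u * 1 := by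
      rw [exp_add, ← mul_assoc, mul_one]
      exact (mul_le_mul_of_nonneg_right h1 (exp_pos _).le).trans h2
    have h4 := exp_le_one_iff.mp (le_of_mul_le_mul_left h3 (hP u))
    have h5 : l * (S u - l) ≤ l * S (u + l) := by nlinarith
    exact le_of_mul_le_mul_left h5 hl
  · simp

/-- Core pointwise estimate for a large positive score. For `e ≤ 0` the drift bound forces
`S 0 ≥ (2/3) S e`. For `e ≥ 0`, either `S 0 < -(2/3) S e`, or the density grows by a factor
exponential in `S e` from `0` to `1`. The threshold `2/3` balances the constants of the cases. -/
lemma pointwise_pos {P S : ℝ → ℝ} (hP : ∀ u, 0 < P u)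
    (h : ∀ u l, P u * exp (l * S u - l ^ 2 / 2) ≤ P (u + l)) {e : ℝ} (he : |e| ≤ 1 / 2)
    {m : ℕ} (hm : 1 ≤ m) (ht : 15 < S e) :
    S e ^ (m + 2) * P 0 ≤
      m.factorial * 15 ^ m * (P 1 * S 1 ^ 2 + P (-1) * S (-1) ^ 2) := by
  obtain ⟨he1, he2⟩ := abs_le.mp he
  have hmono := score_drift hP h
  set t := S e with htdef
  have hfac : (0 : ℝ) < m.factorial := by exact_mod_cast m.factorial_pos
  have hA : 0 ≤ P 1 * S 1 ^ 2 := mul_nonneg (hP _).le (sq_nonneg _)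
  have hB : 0 ≤ P (-1) * S (-1) ^ 2 := mul_nonneg (hP _).le (sq_nonneg _)
  have hK : (0 : ℝ) ≤ m.factorial * 15 ^ m := by positivity
  have hexp := exp_half_le
  -- Transport from `0` to `c = ± 1` when the score at `0` has size at least `(2/3) t`.
  have center : ∀ c T : ℝ, 10 ≤ T → 2 / 3 * t ≤ T → P 0 * exp (T - 1 / 2) ≤ P c →
      T - 1 ≤ |S c| → t ^ (m + 2) * P 0 ≤ m.factorial * 15 ^ m * (P c * S c ^ 2) := by
    intro c T hT htT h1 h2
    have h3 : (9 / 10 * T) ^ 2 ≤ S c ^ 2 := by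
      rw [← sq_abs (S c)]; gcongr; linarith
    have h4 : t ^ (m + 2) ≤ (3 / 2 * T) ^ (m + 2) := by gcongr; linarith
    have h5 := pow_le_factorial_mul_exp (show 0 ≤ T by linarith) m
    have h6 : P 0 * exp T ≤ 5 / 3 * P c := by
      have : exp T = exp (T - 1 / 2) * exp (1 / 2) := by rw [← exp_add]; ring_nf
      rw [this, ← mul_assoc, mul_comm (5 / 3 : ℝ)]
      exact mul_le_mul h1 hexp (exp_pos _).le (hP _).le
    have h7 : (10 : ℝ) * (3 / 2) ^ m ≤ 15 ^ m := by
      have : (15 : ℝ) ^ m = 10 ^ m * (3 / 2) ^ m := by rw [← mul_pow]; norm_num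
      rw [this]; gcongr; exact le_self_pow₀ (by norm_num) (by omega)
    calc t ^ (m + 2) * P 0 ≤ (3 / 2 * T) ^ (m + 2) * P 0 := by gcongr; exact (hP _).le
      _ = 25 / 9 * (3 / 2) ^ m * (9 / 10 * T) ^ 2 * (T ^ m * P 0) := by
          rw [mul_pow, pow_add, pow_add]; ring
      _ ≤ 25 / 9 * (3 / 2) ^ m * S c ^ 2 * ((m.factorial * exp T) * P 0) := by
          have := (hP 0).le
          gcongr
      _ = 25 / 9 * (3 / 2) ^ m * S c ^ 2 * m.factorial * (P 0 * exp T) := by ring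
      _ ≤ 25 / 9 * (3 / 2) ^ m * S c ^ 2 * m.factorial * (5 / 3 * P c) := by gcongr
      _ = (125 / 27 * (3 / 2) ^ m) * (m.factorial * (P c * S c ^ 2)) := by ring
      _ ≤ 15 ^ m * (m.factorial * (P c * S c ^ 2)) := by
          have := (hP c).le
          have h8 : (125 / 27 : ℝ) * (3 / 2) ^ m ≤ 15 ^ m :=
            le_trans (mul_le_mul_of_nonneg_right (by norm_num) (by positivity)) h7
          gcongr
      _ = _ := by ring
  rcases le_total e 0 with h0 | h0
  · have h1 := hmono e (-e) (by linarith)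
    have h2 := hmono 0 1 (by norm_num)
    have h3 := h 0 1
    rw [add_neg_cancel] at h1
    rw [zero_add] at h2 h3
    have := center 1 (S 0) (by linarith) (by linarith)
      (by convert h3 using 3; ring) (h2.trans (le_abs_self _))
    nlinarith
  · by_cases hS : -(2 / 3 * t) ≤ S 0
    -- Pass through `e`: the step to `e` loses at most `exp (-t / 3)`, the step from `e` to `1` gains
    -- `exp (t / 2)`, because `e ≤ 1 / 2`.
    · have h1 := h 0 e
      have h2 := h e (1 - e)
      have h3 := hmono e (1 - e) (by linarith)
      rw [zero_add] at h1
      rw [add_sub_cancel] at h2 h3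
      have h4 : P 0 * exp (t / 6 - 1 / 2) ≤ P 1 := by
        calc P 0 * exp (t / 6 - 1 / 2)
            ≤ P 0 * exp ((e * S 0 - e ^ 2 / 2) + ((1 - e) * t - (1 - e) ^ 2 / 2)) := by
              have := (hP 0).le
              gcongr
              nlinarith
          _ = (P 0 * exp (e * S 0 - e ^ 2 / 2)) * exp ((1 - e) * t - (1 - e) ^ 2 / 2) := by
              rw [exp_add]; ring
          _ ≤ P e * exp ((1 - e) * t - (1 - e) ^ 2 / 2) := by gcongr
          _ ≤ P 1 := h2
      have h5 : (14 / 15 * t) ^ 2 ≤ S 1 ^ 2 := by gcongr; linarith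
      have h6 : P 0 * exp (t / 6) ≤ 5 / 3 * P 1 := by
        have : exp (t / 6) = exp (t / 6 - 1 / 2) * exp (1 / 2) := by rw [← exp_add]; ring_nf
        rw [this, ← mul_assoc, mul_comm (5 / 3 : ℝ)]
        exact mul_le_mul h4 hexp (exp_pos _).le (hP _).le
      have h7 := pow_le_factorial_mul_exp (show 0 ≤ t / 6 by linarith) m
      have h8 : (5 / 2 : ℝ) * 6 ^ m ≤ 15 ^ m := by
        have : (15 : ℝ) ^ m = (5 / 2) ^ m * 6 ^ m := by rw [← mul_pow]; norm_num
        rw [this]; gcongr; exact le_self_pow₀ (by norm_num) (by omega)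
      have h9 : t ^ (m + 2) * P 0 ≤ m.factorial * 15 ^ m * (P 1 * S 1 ^ 2) := by
        calc t ^ (m + 2) * P 0
            = 225 / 196 * 6 ^ m * (14 / 15 * t) ^ 2 * ((t / 6) ^ m * P 0) := by
              rw [div_pow, pow_add]; field_simp; ring
          _ ≤ 225 / 196 * 6 ^ m * S 1 ^ 2 * ((m.factorial * exp (t / 6)) * P 0) := by
              have := (hP 0).le
              gcongr
          _ = 225 / 196 * 6 ^ m * S 1 ^ 2 * m.factorial * (P 0 * exp (t / 6)) := by ring
          _ ≤ 225 / 196 * 6 ^ m * S 1 ^ 2 * m.factorial * (5 / 3 * P 1) := by gcongr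
          _ = (375 / 196 * 6 ^ m) * (m.factorial * (P 1 * S 1 ^ 2)) := by ring
          _ ≤ 15 ^ m * (m.factorial * (P 1 * S 1 ^ 2)) := by
              have h10 : (375 / 196 : ℝ) * 6 ^ m ≤ 15 ^ m :=
                le_trans (mul_le_mul_of_nonneg_right (by norm_num) (by positivity)) h8
              gcongr
          _ = _ := by ring
      nlinarith
    · push Not at hS
      have h2 := hmono (-1) 1 (by norm_num)
      have h3 := h 0 (-1)
      rw [neg_add_cancel] at h2
      rw [zero_add] at h3
      have := center (-1) (-S 0) (by linarith) (by linarith)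
        (by convert h3 using 3; ring)
        (le_trans (by linarith) (neg_le_abs _))
      nlinarith

lemma pointwise_abs {P S : ℝ → ℝ} (hP : ∀ u, 0 < P u)
    (h : ∀ u l, P u * exp (l * S u - l ^ 2 / 2) ≤ P (u + l)) {e : ℝ} (he : |e| ≤ 1 / 2)
    {m : ℕ} (hm : 1 ≤ m) :
    |S e| ^ (m + 2) * P 0 ≤ 15 ^ m * (S e ^ 2 * P 0) +
      m.factorial * 15 ^ m * (P 1 * S 1 ^ 2 + P (-1) * S (-1) ^ 2) := by
  have h0 : 0 ≤ 15 ^ m * (S e ^ 2 * P 0) := by have := (hP 0).le; positivity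
  by_cases ht : |S e| ≤ 15
  · have h1 : |S e| ^ (m + 2) * P 0 ≤ 15 ^ m * (S e ^ 2 * P 0) := by
      rw [pow_add, sq_abs, mul_assoc]
      have := (hP 0).le
      gcongr
    have := (hP 1).le
    have := (hP (-1)).le
    have : 0 ≤ m.factorial * 15 ^ m * (P 1 * S 1 ^ 2 + P (-1) * S (-1) ^ 2) := by positivity
    linarith
  · push Not at ht
    rcases lt_abs.mp ht with h1 | h1
    · rw [abs_of_pos (by linarith)]
      linarith [pointwise_pos hP h he hm h1]
    · rw [abs_of_neg (by linarith)]
      have := pointwise_pos (P := fun u => P (-u)) (S := fun u => -S (-u)) (e := -e)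
        (fun u => hP _) (fun u l => by
          have := h (-u) (-l)
          convert this using 1
          · ring_nf
          · ring_nf) (by rwa [abs_neg]) hm (by simpa using h1)
      simp only [neg_neg, neg_zero, neg_sq] at this
      linarith

/-! ### Smoothed densities -/

lemma gaussPdf_pos {r : ℝ} (hr : 0 < r) (x : ℝ) : 0 < gaussPdf r x := by
  unfold gaussPdf; positivity

lemma continuous_gaussPdf (r : ℝ) : Continuous (gaussPdf r) := by
  unfold gaussPdf; fun_prop

lemma gaussPdf_le {r : ℝ} (x : ℝ) : gaussPdf r x ≤ 1 / √(2 * π * r ^ 2) := by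
  unfold gaussPdf
  gcongr
  rw [exp_le_one_iff, neg_div, neg_nonpos]
  positivity

lemma hasDerivAt_gaussPdf {r : ℝ} (hr : 0 < r) (x : ℝ) :
    HasDerivAt (gaussPdf r) (-(x / r ^ 2) * gaussPdf r x) x := by
  unfold gaussPdf
  have := (((((hasDerivAt_id x).pow 2).neg).div_const (2 * r ^ 2)).exp).div_const
    (√(2 * π * r ^ 2))
  refine this.congr_deriv ?_
  simp only [id, Pi.pow_apply, Nat.cast_ofNat, Nat.add_one_sub_one, pow_one, mul_one, Pi.neg_apply]
  field_simp

lemma abs_deriv_gaussPdf_le {r : ℝ} (hr : 0 < r) (x : ℝ) :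
    |(-(x / r ^ 2) * gaussPdf r x)| ≤ 1 / r * (1 / √(2 * π * r ^ 2)) := by
  have h1 : |x / r| * exp (-(x ^ 2) / (2 * r ^ 2)) ≤ 1 := by
    have h2 : |x / r| ≤ exp (x ^ 2 / (2 * r ^ 2)) := by
      have h3 := add_one_le_exp (x ^ 2 / (2 * r ^ 2))
      have h4 : x ^ 2 / (2 * r ^ 2) = |x / r| ^ 2 / 2 := by
        rw [sq_abs, div_pow]; field_simp
      rw [h4] at h3 ⊢
      nlinarith [sq_nonneg (|x / r| - 1)]
    rw [neg_div, exp_neg]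
    exact mul_inv_le_one_of_le₀ h2 (exp_pos _).le
  rw [abs_mul, abs_of_pos (gaussPdf_pos hr x), abs_neg]
  unfold gaussPdf
  have h5 : |x / r ^ 2| = 1 / r * |x / r| := by
    rw [abs_div, abs_div, abs_of_pos hr, abs_of_pos (pow_pos hr 2)]
    field_simp
  rw [h5, mul_div_assoc', mul_assoc, mul_div_assoc]
  gcongr

lemma integrable_gaussPdf {r : ℝ} (hr : 0 < r) : Integrable (gaussPdf r) := by
  have := (integrable_exp_neg_mul_sq (show 0 < 1 / (2 * r ^ 2) by positivity)).div_const
    (√(2 * π * r ^ 2))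
  convert this using 2 with x
  unfold gaussPdf
  congr 2
  ring

section Smoothed

variable {f : ℝ → ℝ} {r : ℝ}

lemma integrable_smooth_integrand (hf : IsDensity f) (hr : 0 < r) (x : ℝ) :
    Integrable (fun y => f y * gaussPdf r (x - y)) := by
  refine hf.2.1.mul_bdd (c := 1 / √(2 * π * r ^ 2)) ?_ (.of_forall fun y => ?_)
  · exact ((continuous_gaussPdf r).comp (by fun_prop)).aestronglyMeasurable
  · rw [norm_eq_abs, abs_of_pos (gaussPdf_pos hr _)]
    exact gaussPdf_le _

lemma hasDerivAt_smoothed (hf : IsDensity f) (hr : 0 < r) (x : ℝ) :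
    Integrable (fun y => f y * (-((x - y) / r ^ 2) * gaussPdf r (x - y))) ∧
    HasDerivAt (smoothed f r) (∫ y, f y * (-((x - y) / r ^ 2) * gaussPdf r (x - y))) x := by
  have hg := continuous_gaussPdf r
  refine hasDerivAt_integral_of_dominated_loc_of_deriv_le (μ := volume)
    (F := fun x y => f y * gaussPdf r (x - y))
    (F' := fun x y => f y * (-((x - y) / r ^ 2) * gaussPdf r (x - y)))
    (bound := fun y => f y * (1 / r * (1 / √(2 * π * r ^ 2)))) (s := Set.univ)
    Filter.univ_mem (.of_forall fun x => (integrable_smooth_integrand hf hr x).1)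
    (integrable_smooth_integrand hf hr x) ?_ ?_ ?_ ?_
  · exact hf.2.1.1.mul (Continuous.aestronglyMeasurable (by fun_prop))
  · refine .of_forall fun y z _ => ?_
    rw [norm_mul, norm_of_nonneg (hf.1 y), norm_eq_abs]
    exact mul_le_mul_of_nonneg_left (abs_deriv_gaussPdf_le hr _) (hf.1 y)
  · exact hf.2.1.mul_const _
  · refine .of_forall fun y z _ => ?_
    have := (hasDerivAt_gaussPdf hr (z - y)).comp z ((hasDerivAt_id z).sub_const y)
    simpa using this.const_mul (f y)

lemma smoothed_pos (hf : IsDensity f) (hr : 0 < r) (x : ℝ) : 0 < smoothed f r x := by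
  have hsupp : Function.support (fun y => f y * gaussPdf r (x - y)) = Function.support f := by
    ext y; simp [(gaussPdf_pos hr (x - y)).ne']
  unfold smoothed
  rw [integral_pos_iff_support_of_nonneg
    (fun y => mul_nonneg (hf.1 y) (gaussPdf_pos hr _).le) (integrable_smooth_integrand hf hr x),
    hsupp, ← integral_pos_iff_support_of_nonneg (fun y => hf.1 y) hf.2.1, hf.2.2]
  exact one_pos

lemma continuous_smoothed (hf : IsDensity f) (hr : 0 < r) : Continuous (smoothed f r) :=
  continuous_iff_continuousAt.mpr fun x => (hasDerivAt_smoothed hf hr x).2.continuousAt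

lemma integrable_smoothed (hf : IsDensity f) (hr : 0 < r) : Integrable (smoothed f r) :=
  hf.2.1.integrable_convolution (ContinuousLinearMap.mul ℝ ℝ) (integrable_gaussPdf hr)

lemma measurable_score (hf : IsDensity f) (hr : 0 < r) : Measurable (score f r) :=
  (measurable_deriv _).div (continuous_smoothed hf hr).measurable

/-- Log-growth bound: Jensen's inequality for the posterior law of the signal given the
observation `x`, under which the score is the mean of `(y - x) / r ^ 2`. -/
lemma smoothed_growth (hf : IsDensity f) (hr : 0 < r) (x l : ℝ) :
    smoothed f r x * exp (l * (r * score f r x) - l ^ 2 / 2) ≤ smoothed f r (x + r * l) := by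
  obtain ⟨hi', hd⟩ := hasDerivAt_smoothed hf hr x
  have hi := integrable_smooth_integrand hf hr x
  have hp := smoothed_pos hf hr x
  have hs : score f r x * smoothed f r x =
      ∫ y, f y * (-((x - y) / r ^ 2) * gaussPdf r (x - y)) := by
    unfold score
    rw [div_mul_cancel₀ _ hp.ne']
    exact hd.deriv
  set s := score f r x
  set c := exp (l * (r * s) - l ^ 2 / 2) with hc
  -- The tangent line of `exp` at the posterior mean.
  have key : ∀ y, c * ((1 - l * r * s) * (f y * gaussPdf r (x - y)) +
      l * r * (f y * (-((x - y) / r ^ 2) * gaussPdf r (x - y)))) ≤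
      f y * gaussPdf r (x + r * l - y) := by
    intro y
    have h1 : gaussPdf r (x + r * l - y) =
        gaussPdf r (x - y) * (c * exp (-l * (x - y) / r - l * r * s)) := by
      unfold gaussPdf
      rw [hc, ← exp_add, div_mul_eq_mul_div, ← exp_add]
      congr 2
      field_simp
      ring
    have h2 := add_one_le_exp (-l * (x - y) / r - l * r * s)
    rw [h1]
    have h3 : 0 ≤ f y * gaussPdf r (x - y) * c :=
      mul_nonneg (mul_nonneg (hf.1 y) (gaussPdf_pos hr _).le) (exp_pos _).le
    have h4 := mul_le_mul_of_nonneg_left h2 h3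
    calc _ = f y * gaussPdf r (x - y) * c * (-l * (x - y) / r - l * r * s + 1) := by
          field_simp; ring
      _ ≤ _ := h4
      _ = _ := by ring
  have hmono := integral_mono
    (((hi.const_mul (1 - l * r * s)).add (hi'.const_mul (l * r))).const_mul c)
    (integrable_smooth_integrand hf hr (x + r * l)) key
  simp only [Pi.add_apply] at hmono
  rw [integral_const_mul, integral_add (hi.const_mul _) (hi'.const_mul _), integral_const_mul,
    integral_const_mul, ← hs] at hmono
  change c * ((1 - l * r * s) * smoothed f r x + _) ≤ smoothed f r _ at hmono
  calc _ = c * ((1 - l * r * s) * smoothed f r x + l * r * (s * smoothed f r x)) := by ring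
    _ ≤ _ := hmono

/-- The Fisher information integral converges: averaging the log-growth bound over the shifts
`± r` gives `s(x)² f_r(x) ≤ (4 / r²) (f_r(x + r) + f_r(x - r))`. -/
lemma integrable_score_sq (hf : IsDensity f) (hr : 0 < r) :
    Integrable (fun x => score f r x ^ 2 * smoothed f r x) := by
  have hp := integrable_smoothed hf hr
  have hb := ((hp.comp_add_right r).add (hp.comp_add_right (-r))).const_mul (4 / r ^ 2)
  refine hb.mono' (((measurable_score hf hr).pow_const 2).mul
    (continuous_smoothed hf hr).measurable).aestronglyMeasurable (.of_forall fun x => ?_)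
  have h0 := (smoothed_pos hf hr x).le
  rw [norm_of_nonneg (by positivity)]
  have h1 := smoothed_growth hf hr x 1
  have h2 := smoothed_growth hf hr x (-1)
  rw [mul_one] at h1
  rw [mul_neg_one] at h2
  simp only [Pi.add_apply]
  set S := r * score f r x with hS
  have h3 : score f r x ^ 2 * smoothed f r x = 1 / r ^ 2 * (S ^ 2 * smoothed f r x) := by
    rw [hS]; field_simp
  have h4 : exp (1 * S - 1 ^ 2 / 2) * exp (1 / 2) = exp S := by rw [← exp_add]; ring_nf
  have h5 : exp (-1 * S - (-1) ^ 2 / 2) * exp (1 / 2) = exp (-S) := by rw [← exp_add]; ring_nf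
  have h6 : S ^ 2 ≤ 2 * (exp S + exp (-S)) := by
    have h7 := quadratic_le_exp_of_nonneg (abs_nonneg S)
    have h8 : exp |S| ≤ exp S + exp (-S) := exp_abs_le S
    rw [sq_abs] at h7
    linarith [abs_nonneg S]
  have h7 := exp_half_le
  have h8 : S ^ 2 * smoothed f r x ≤ 4 * (smoothed f r (x + r) + smoothed f r (x + -r)) := by
    calc S ^ 2 * smoothed f r x ≤ 2 * (exp S + exp (-S)) * smoothed f r x := by gcongr
      _ = 2 * exp (1 / 2) * (smoothed f r x * exp (1 * S - 1 ^ 2 / 2) +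
          smoothed f r x * exp (-1 * S - (-1) ^ 2 / 2)) := by rw [← h4, ← h5]; ring
      _ ≤ 4 * (smoothed f r (x + r) + smoothed f r (x + -r)) := by
          have := (smoothed_pos hf hr (x + r)).le
          have := (smoothed_pos hf hr (x + -r)).le
          gcongr
          linarith
  rw [h3]
  calc 1 / r ^ 2 * (S ^ 2 * smoothed f r x)
      ≤ 1 / r ^ 2 * (4 * (smoothed f r (x + r) + smoothed f r (x + -r))) := by gcongr
    _ = _ := by ring

/-- The pointwise estimate in the original scale: `P u = f_r(x + r u)`, `S u = r s(x + r u)`. -/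
lemma pointwise_score (hf : IsDensity f) (hr : 0 < r) {m : ℕ} (hm : 1 ≤ m) {ε : ℝ}
    (hε : |ε| ≤ r / 2) (x : ℝ) :
    |score f r (x + ε)| ^ (m + 2) * smoothed f r x ≤ (15 / r) ^ m *
      (score f r (x + ε) ^ 2 * smoothed f r x + m.factorial *
        (score f r (x + r) ^ 2 * smoothed f r (x + r) +
          score f r (x + -r) ^ 2 * smoothed f r (x + -r))) := by
  have := pointwise_abs (P := fun u => smoothed f r (x + r * u))
    (S := fun u => r * score f r (x + r * u)) (e := ε / r) (fun u => smoothed_pos hf hr _)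
    (fun u l => by
      have := smoothed_growth hf hr (x + r * u) l
      rwa [add_assoc, ← mul_add] at this)
    (by rw [abs_div, abs_of_pos hr, div_le_iff₀ hr]; linarith) hm
  simp only [mul_div_cancel₀ _ hr.ne', mul_zero, add_zero, mul_one, mul_neg] at this
  rw [abs_mul, abs_of_pos hr, mul_pow, mul_pow, mul_pow, mul_pow] at this
  refine le_of_mul_le_mul_left ?_ (show 0 < r ^ (m + 2) by positivity)
  calc _ = r ^ (m + 2) * |score f r (x + ε)| ^ (m + 2) * smoothed f r x := by ring
    _ ≤ _ := this
    _ = _ := by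
        rw [div_pow, pow_add]
        field_simp

end Smoothed

/-- Off-center moment bound (sub-Gamma moments) for the score of an `r`-smoothed
density: for `k ≥ 3` and `|ε| ≤ r/2`,
`E_{x~f_r}[|s_r(x+ε)|^k] ≤ (k!/2)·(15/r)^(k−2)·max(E_{x~f_r}[s_r(x+ε)²], I_r)`. -/
theorem offcenter_score_moment_bound (f : ℝ → ℝ) (r : ℝ) (hf : IsDensity f) (hr : 0 < r)
    (k : ℕ) (hk : 3 ≤ k) (ε : ℝ) (hε : |ε| ≤ r / 2) :
    (∫ x, |score f r (x + ε)| ^ k * smoothed f r x) ≤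
      ((Nat.factorial k : ℝ) / 2) * (15 / r) ^ (k - 2) *
        max (∫ x, score f r (x + ε) ^ 2 * smoothed f r x) (fisherInfo f r) := by
  obtain ⟨m, rfl⟩ : ∃ m, k = m + 2 := ⟨k - 2, by omega⟩
  have hm : 1 ≤ m := by omega
  rw [Nat.add_sub_cancel]
  have hp := fun x => (smoothed_pos hf hr x).le
  have hI := integrable_score_sq hf hr
  set A := ∫ x, score f r (x + ε) ^ 2 * smoothed f r x with hA
  set I := fisherInfo f r with hIdef
  have hA0 : 0 ≤ A := integral_nonneg fun x => mul_nonneg (sq_nonneg _) (hp x)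
  have hM : 0 ≤ max A I := le_max_of_le_left hA0
  by_cases hkint : Integrable (fun x => |score f r (x + ε)| ^ (m + 2) * smoothed f r x)
  swap
  -- A divergent left-hand side has the junk value `0`.
  · rw [integral_undef hkint]
    positivity
  have hmeas : Measurable fun x => score f r (x + ε) :=
    (measurable_score hf hr).comp (measurable_add_const ε)
  have h2int : Integrable (fun x => score f r (x + ε) ^ 2 * smoothed f r x) := by
    refine ((integrable_smoothed hf hr).add hkint).mono'
      ((hmeas.pow_const 2).mul (continuous_smoothed hf hr).measurable).aestronglyMeasurable
      (.of_forall fun x => ?_)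
    have h0 := hp x
    rw [norm_of_nonneg (by positivity), ← sq_abs]
    simp only [Pi.add_apply]
    have : |score f r (x + ε)| ^ 2 ≤ 1 + |score f r (x + ε)| ^ (m + 2) := by
      rcases le_total |score f r (x + ε)| 1 with h1 | h1
      · have := pow_le_one₀ (n := 2) (abs_nonneg _) h1
        have := pow_nonneg (abs_nonneg (score f r (x + ε))) (m + 2)
        linarith
      · have := pow_le_pow_right₀ h1 (show 2 ≤ m + 2 by omega)
        linarith
    nlinarith
  have hIp := hI.comp_add_right r
  have hIm := hI.comp_add_right (-r)
  have hmono := integral_mono hkint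
    ((h2int.add ((hIp.add hIm).const_mul (m.factorial : ℝ))).const_mul ((15 / r) ^ m))
    (pointwise_score hf hr hm hε)
  simp only [Pi.add_apply] at hmono
  have hsum : ∫ x, (score f r (x + ε) ^ 2 * smoothed f r x + m.factorial *
      (score f r (x + r) ^ 2 * smoothed f r (x + r) +
        score f r (x + -r) ^ 2 * smoothed f r (x + -r))) = _ :=
    integral_add h2int ((hIp.add hIm).const_mul _)
  rw [integral_const_mul, hsum, integral_const_mul, integral_add hIp hIm,
    integral_add_right_eq_self (fun x => score f r x ^ 2 * smoothed f r x),
    integral_add_right_eq_self (fun x => score f r x ^ 2 * smoothed f r x)] at hmono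
  change _ ≤ (15 / r) ^ m * (A + m.factorial * (I + I)) at hmono
  refine hmono.trans ?_
  have hfac1 : (1 : ℝ) ≤ m.factorial := by exact_mod_cast m.factorial_pos
  have hfac : 3 * (m.factorial : ℝ) ≤ ((m + 2).factorial : ℝ) / 2 := by
    have hm' : (1 : ℝ) ≤ m := by exact_mod_cast hm
    rw [Nat.factorial_succ, Nat.factorial_succ]
    push_cast
    nlinarith [mul_nonneg (show (0 : ℝ) ≤ m.factorial by linarith) (sub_nonneg.mpr hm')]
  calc (15 / r) ^ m * (A + m.factorial * (I + I))
      ≤ (15 / r) ^ m * (m.factorial * max A I + m.factorial * (max A I + max A I)) := by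
        gcongr
        · exact (le_max_left A I).trans (le_mul_of_one_le_left hM hfac1)
        · exact le_max_right A I
        · exact le_max_right A I
    _ = 3 * m.factorial * (15 / r) ^ m * max A I := by ring
    _ ≤ _ := by gcongr

end
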